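/- Let G = (V,E) be a finite simple connected graph and let W ⊆ V be a vertex cut with |W| = k that is also an independent set in G, such that G − W has exactly two connected components. Let G₁ = (V₁,E₁) and G₂ = (V₂,E₂) be the split components of G at W, i.e., subgraphs of G with V₁ ∪ V₂ = V, V₁ ∩ V₂ = W, E₁ ∪ E₂ = E and E₁ ∩ E₂ = ∅. Then N(G,x) = N(G₁,x) + N(G₂,x) − Σ_{U ⊆ W} A_U + Σ_{∅ ≠ U ⊆ W} (−1)^{|U|+1} ((1+x)^{|∩_{u∈U} N_{G₁}(u)|} − 1)·((1+x)^{|∩_{u∈U} N_{G₂}(u)|} − 1), where A_U = x^{|U|} if ∩_{u∈U} N_{G₁}(u) ≠ ∅ and ∩_{u∈U} N_{G₂}(u) ≠ ∅, and A_U = 0 otherwise. -/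

import Mathlib

open Classical in
/-- The neighborhood polynomial of a finite simple graph `G`, evaluated at `x`:
the generating function of the family of vertex subsets having a common neighbor. -/
noncomputable def nhdPoly {V : Type*} [Fintype V] (G : SimpleGraph V) (x : ℝ) : ℝ :=
  ∑ A ∈ Finset.univ.filter (fun A : Finset V => ∃ w : V, ∀ a ∈ A, G.Adj w a), x ^ A.card

open Finset in
/-- The generating function of the subsets of a disjoint union meeting both parts. -/
theorem sum_pow_card_filter_meets_both {V : Type*} [DecidableEq V] (P Q : Finset V)
    (h : Disjoint P Q) (x : ℝ) :
    ∑ A ∈ (P ∪ Q).powerset with (A ∩ P).Nonempty ∧ (A ∩ Q).Nonempty, x ^ #A =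
      ((1 + x) ^ #P - 1) * ((1 + x) ^ #Q - 1) := by
  have key (R : Finset V) : ∑ A ∈ R.powerset.erase ∅, x ^ #A = (1 + x) ^ #R - 1 := by
    rw [sum_erase_eq_sub (empty_mem_powerset R), card_empty, pow_zero, add_comm,
      ← sum_pow_mul_eq_add_pow]
    simp
  rw [← key, ← key, Finset.sum_mul_sum, ← Finset.sum_product']
  refine Finset.sum_nbij' (fun A => (A ∩ P, A ∩ Q)) (fun p => p.1 ∪ p.2) ?_ ?_ ?_ ?_ ?_
  · intro A hA
    simp only [mem_filter, mem_product, mem_erase, mem_powerset] at hA ⊢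
    exact ⟨⟨hA.2.1.ne_empty, inter_subset_right⟩, hA.2.2.ne_empty, inter_subset_right⟩
  · rintro ⟨A, B⟩ hA
    simp only [mem_filter, mem_product, mem_erase, mem_powerset] at hA ⊢
    obtain ⟨⟨hA, hAP⟩, hB, hBQ⟩ := hA
    obtain ⟨a, ha⟩ := Finset.nonempty_iff_ne_empty.2 hA
    obtain ⟨b, hb⟩ := Finset.nonempty_iff_ne_empty.2 hB
    exact ⟨union_subset_union hAP hBQ, ⟨a, by simp [ha, hAP ha]⟩, ⟨b, by simp [hb, hBQ hb]⟩⟩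
  · intro A hA
    simp only [mem_filter, mem_powerset] at hA
    rw [← inter_union_distrib_left]
    exact inter_eq_left.2 hA.1
  · rintro ⟨A, B⟩ hA
    simp only [mem_product, mem_erase, mem_powerset] at hA
    rw [disjoint_left] at h
    ext a <;> grind
  · intro A hA
    simp only [mem_filter, mem_powerset] at hA
    rw [← pow_add, ← card_union_of_disjoint (h.mono inter_subset_right inter_subset_right),
      ← inter_union_distrib_left, inter_eq_left.2 hA.1]

open Classical in
/-- Splitting formula for the neighborhood polynomial at an independent vertex cut `W`
(with `|W| = k`) of a connected graph `G` such that `G − W` has exactly two connected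
components.  The split components `G₁`, `G₂` are modelled as spanning-type subgraphs of
`G` whose edges lie inside the vertex sets `V₁`, `V₂` with `V₁ ∪ V₂ = V`, `V₁ ∩ V₂ = W`,
`E₁ ∪ E₂ = E`, `E₁ ∩ E₂ = ∅` (vertices outside `Vᵢ` are isolated in `Gᵢ` and do not
affect the neighborhood complex). -/
theorem nhdPoly_independent_vertex_cut {V : Type*} [Fintype V]
    (G G₁ G₂ : SimpleGraph V) (V₁ V₂ : Set V) (W : Finset V) (k : ℕ)
    (hconn : G.Connected)
    (hk : W.card = k)
    (hindep : ∀ a ∈ W, ∀ b ∈ W, ¬ G.Adj a b)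
    (hcut : Nat.card (SimpleGraph.induce ((↑W : Set V)ᶜ) G).ConnectedComponent = 2)
    (hG₁ : G₁ ≤ G) (hG₂ : G₂ ≤ G)
    (hG₁V : ∀ a b, G₁.Adj a b → a ∈ V₁ ∧ b ∈ V₁)
    (hG₂V : ∀ a b, G₂.Adj a b → a ∈ V₂ ∧ b ∈ V₂)
    (hVunion : V₁ ∪ V₂ = Set.univ) (hVinter : V₁ ∩ V₂ = ↑W)
    (hEunion : G₁.edgeSet ∪ G₂.edgeSet = G.edgeSet)
    (hEinter : G₁.edgeSet ∩ G₂.edgeSet = ∅) (x : ℝ) :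
    nhdPoly G x =
      nhdPoly G₁ x + nhdPoly G₂ x
        - (∑ U ∈ W.powerset,
            if (⋂ u ∈ U, G₁.neighborSet u).Nonempty ∧ (⋂ u ∈ U, G₂.neighborSet u).Nonempty
            then x ^ U.card else 0)
        + ∑ U ∈ W.powerset.filter (· ≠ ∅),
            (-1 : ℝ) ^ (U.card + 1)
              * ((1 + x) ^ (Nat.card ↥(⋂ u ∈ U, G₁.neighborSet u)) - 1)
              * ((1 + x) ^ (Nat.card ↥(⋂ u ∈ U, G₂.neighborSet u)) - 1) := by
  have hadj (a b : V) : G.Adj a b ↔ G₁.Adj a b ∨ G₂.Adj a b := by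
    have := Set.ext_iff.1 hEunion s(a, b)
    simpa using this.symm
  have hV (a : V) : a ∈ V₁ ∨ a ∈ V₂ := by
    have := Set.ext_iff.1 hVunion a
    simpa using this
  have hVW (a : V) : a ∈ V₁ ∧ a ∈ V₂ ↔ a ∈ W := by
    have := Set.ext_iff.1 hVinter a
    simpa using this
  have hadj₁ (u : V) (hu : u ∈ W) (a : V) : G₁.Adj u a ↔ G.Adj u a ∧ a ∉ V₂ := by grind
  have hadj₂ (u : V) (hu : u ∈ W) (a : V) : G₂.Adj u a ↔ G.Adj u a ∧ a ∉ V₁ := by grind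
  let N (H : SimpleGraph V) : Finset (Finset V) :=
    Finset.univ.filter (fun A : Finset V => ∃ w : V, ∀ a ∈ A, H.Adj w a)
  let S (u : V) : Finset (Finset V) :=
    Finset.univ.filter fun A => (∀ a ∈ A, G.Adj u a) ∧ (∃ a ∈ A, a ∉ V₂) ∧ ∃ a ∈ A, a ∉ V₁
  have hN : N G = (N G₁ ∪ N G₂) ∪ W.biUnion S := by
    ext A
    simp only [N, S, Finset.mem_union, Finset.mem_filter, Finset.mem_univ, true_and,
      Finset.mem_biUnion]
    constructor
    · rintro ⟨w, hw⟩
      by_cases h₁ : ∀ a ∈ A, G₁.Adj w a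
      · exact Or.inl (Or.inl ⟨w, h₁⟩)
      by_cases h₂ : ∀ a ∈ A, G₂.Adj w a
      · exact Or.inl (Or.inr ⟨w, h₂⟩)
      push Not at h₁ h₂
      refine Or.inr ⟨w, ?_, hw, ?_⟩ <;> grind
    · rintro ((⟨w, hw⟩ | ⟨w, hw⟩) | ⟨w, -, hw, -⟩)
      · exact ⟨w, fun a ha => hG₁ (hw a ha)⟩
      · exact ⟨w, fun a ha => hG₂ (hw a ha)⟩
      · exact ⟨w, hw⟩
  have hdisj : Disjoint (N G₁ ∪ N G₂) (W.biUnion S) := by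
    rw [Finset.disjoint_left]
    intro A hA hS
    simp only [N, S, Finset.mem_union, Finset.mem_filter, Finset.mem_univ, true_and,
      Finset.mem_biUnion] at hA hS
    grind
  have hinter : N G₁ ∩ N G₂ = W.powerset.filter fun U =>
      (⋂ u ∈ U, G₁.neighborSet u).Nonempty ∧ (⋂ u ∈ U, G₂.neighborSet u).Nonempty := by
    ext A
    simp only [N, Finset.mem_inter, Finset.mem_filter, Finset.mem_univ, true_and,
      Finset.mem_powerset, Set.Nonempty, Set.mem_iInter, SimpleGraph.mem_neighborSet]
    constructor
    · rintro ⟨⟨v, hv⟩, w, hw⟩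
      refine ⟨fun a ha => (hVW a).1 ?_, ⟨v, fun a ha => ?_⟩, w, fun a ha => ?_⟩
      · exact ⟨(hG₁V _ _ (hv a ha)).2, (hG₂V _ _ (hw a ha)).2⟩
      · exact (hv a ha).symm
      · exact (hw a ha).symm
    · rintro ⟨-, ⟨v, hv⟩, w, hw⟩
      exact ⟨⟨v, fun a ha => (hv a ha).symm⟩, w, fun a ha => (hw a ha).symm⟩
  have hmixed (U : Finset V) (hUW : U ⊆ W) (hU : U.Nonempty) :
      ∑ A ∈ U.inf' hU S, x ^ A.card =
        ((1 + x) ^ (Nat.card ↥(⋂ u ∈ U, G₁.neighborSet u)) - 1)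
          * ((1 + x) ^ (Nat.card ↥(⋂ u ∈ U, G₂.neighborSet u)) - 1) := by
    have hcard (H : SimpleGraph V) : Nat.card ↥(⋂ u ∈ U, H.neighborSet u) =
        (Finset.univ.filter fun a => ∀ u ∈ U, H.Adj u a).card := by
      rw [Nat.card_coe_set_eq, ← Set.ncard_coe_finset]
      congr 1
      ext a
      simp
    rw [hcard, hcard, ← sum_pow_card_filter_meets_both]
    · refine Finset.sum_congr ?_ fun _ _ => rfl
      have ⟨u₀, hu₀⟩ := hU
      ext A
      have hmem : A ∈ U.inf' hU S ↔ ∀ u ∈ U, A ∈ S u := by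
        rw [Finset.inf'_eq_inf, Finset.mem_inf]
      rw [hmem]
      simp only [S, Finset.mem_filter, Finset.mem_univ, true_and, Finset.mem_powerset,
        Finset.subset_iff, Finset.mem_union, Finset.Nonempty, Finset.mem_inter]
      grind
    · rw [Finset.disjoint_left]
      obtain ⟨u, hu⟩ := hU
      intro a h₁ h₂
      simp only [Finset.mem_filter, Finset.mem_univ, true_and] at h₁ h₂
      grind
  have hIE : ∑ A ∈ W.biUnion S, x ^ A.card = ∑ U ∈ W.powerset.filter (· ≠ ∅),
      (-1 : ℝ) ^ (U.card + 1)
        * ((1 + x) ^ (Nat.card ↥(⋂ u ∈ U, G₁.neighborSet u)) - 1)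
        * ((1 + x) ^ (Nat.card ↥(⋂ u ∈ U, G₂.neighborSet u)) - 1) := by
    rw [Finset.inclusion_exclusion_sum_biUnion]
    simp only [← Finset.nonempty_iff_ne_empty]
    rw [← Finset.sum_coe_sort (W.powerset.filter (·.Nonempty))]
    refine Finset.sum_congr rfl fun U _ => ?_
    rw [hmixed U.1 (Finset.mem_powerset.1 (Finset.mem_filter.1 U.2).1), zsmul_eq_mul]
    push_cast
    ring
  change ∑ A ∈ N G, x ^ A.card = ∑ A ∈ N G₁, x ^ A.card + ∑ A ∈ N G₂, x ^ A.card - _ + _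
  rw [hN, Finset.sum_union hdisj, hIE, ← Finset.sum_filter, ← hinter,
    ← Finset.sum_union_inter, add_sub_cancel_right]
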